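/- arXiv:1301.0699 — 2 statements merged into one kernel-verified Lean document; each statement's English description precedes it below -/
import Mathlib

section
/- Let p, q > 1 and a ≥ 0. Then the function x ↦ (sin_{p,q}(x)/x)^a · (1 - sin_{p,q}(x)^q)^{1/p} is decreasing on (0,1). -/
open Real Set

/-- `arcsinPQ p q x = ∫₀ˣ (1 - tᵠ)^(-1/p) dt`, the generalized inverse sine. -/
noncomputable def arcsinPQ (p q x : ℝ) : ℝ := ∫ t in (0:ℝ)..x, (1 - t ^ q) ^ (-(1/p))

/-- `sinPQ p q` is the inverse function of `arcsinPQ p q` (restricted to `[0,1]`). -/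
noncomputable def sinPQ (p q : ℝ) : ℝ → ℝ := Function.invFunOn (arcsinPQ p q) (Set.Icc 0 1)

/-!
Substitute `x = arcsinPQ p q t`: the function becomes
`t ↦ (t / arcsinPQ p q t) ^ a * (1 - t ^ q) ^ (1 / p)` on `(0, 1)`. The integrand of `arcsinPQ` is
increasing, so `arcsinPQ p q` is convex; as it vanishes at `0`, the slope `arcsinPQ p q t / t` is
increasing, and both factors are nonnegative and decreasing. Hence the function is decreasing on
the image of `(0, 1)` under `arcsinPQ p q`, which for `p > 1` is `(0, π_{p,q}/2)` and for `p ≤ 1`,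
where the integral up to `1` diverges, is `(0, ∞)`.
-/

section ArcsinPQ

variable {p q b t : ℝ}

lemma one_sub_rpow_pos (hq : 0 < q) (ht : t ∈ Ico (0 : ℝ) 1) : 0 < 1 - t ^ q :=
  sub_pos.2 (rpow_lt_one ht.1 ht.2 hq)

lemma antitoneOn_one_sub_rpow (hq : 0 ≤ q) : AntitoneOn (fun t : ℝ => 1 - t ^ q) (Ici 0) :=
  fun _ hs _ _ hst => sub_le_sub_left (rpow_le_rpow hs hst hq) 1

lemma monotoneOn_arcsinPQ_integrand (hp : 0 ≤ p) (hq : 0 < q) :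
    MonotoneOn (fun t : ℝ => (1 - t ^ q) ^ (-(1 / p))) (Ico 0 1) := fun _ hs _ ht hst =>
  rpow_le_rpow_of_nonpos (one_sub_rpow_pos hq ht) (antitoneOn_one_sub_rpow hq.le hs.1 ht.1 hst)
    (neg_nonpos.2 (one_div_nonneg.2 hp))

lemma one_le_arcsinPQ_integrand (hp : 0 ≤ p) (hq : 0 < q) (ht : t ∈ Ico (0 : ℝ) 1) :
    1 ≤ (1 - t ^ q) ^ (-(1 / p)) := by
  simpa [zero_rpow hq.ne'] using
    monotoneOn_arcsinPQ_integrand hp hq (left_mem_Ico.2 one_pos) ht ht.1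

lemma continuousAt_arcsinPQ_integrand (hq : 0 < q) (ht : t ∈ Ico (0 : ℝ) 1) :
    ContinuousAt (fun t : ℝ => (1 - t ^ q) ^ (-(1 / p))) t :=
  (continuousAt_const.sub (continuousAt_rpow_const t q (.inr hq.le))).rpow_const
    (.inl (one_sub_rpow_pos hq ht).ne')

lemma intervalIntegrable_arcsinPQ_integrand (hq : 0 < q) (ht : t ∈ Ico (0 : ℝ) 1) :
    IntervalIntegrable (fun t : ℝ => (1 - t ^ q) ^ (-(1 / p))) MeasureTheory.volume 0 t :=
  ContinuousOn.intervalIntegrable_of_Icc ht.1 fun _ hs =>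
    (continuousAt_arcsinPQ_integrand hq ⟨hs.1, hs.2.trans_lt ht.2⟩).continuousWithinAt

lemma arcsinPQ_zero (p q : ℝ) : arcsinPQ p q 0 = 0 :=
  intervalIntegral.integral_same

lemma hasDerivAt_arcsinPQ (hq : 0 < q) (ht : t ∈ Ico (0 : ℝ) 1) :
    HasDerivAt (arcsinPQ p q) ((1 - t ^ q) ^ (-(1 / p))) t :=
  have hmeas : Measurable fun t : ℝ => (1 - t ^ q) ^ (-(1 / p)) := by fun_prop
  intervalIntegral.integral_hasDerivAt_right (intervalIntegrable_arcsinPQ_integrand hq ht)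
    hmeas.stronglyMeasurable.stronglyMeasurableAtFilter (continuousAt_arcsinPQ_integrand hq ht)

lemma continuousOn_arcsinPQ (hq : 0 < q) : ContinuousOn (arcsinPQ p q) (Ico 0 1) :=
  fun _ ht => (hasDerivAt_arcsinPQ hq ht).continuousAt.continuousWithinAt

lemma le_arcsinPQ (hp : 0 ≤ p) (hq : 0 < q) (ht : t ∈ Ico (0 : ℝ) 1) : t ≤ arcsinPQ p q t := by
  simpa [arcsinPQ] using intervalIntegral.integral_mono_on ht.1
    (intervalIntegrable_const (c := (1 : ℝ))) (intervalIntegrable_arcsinPQ_integrand hq ht)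
    fun s hs => one_le_arcsinPQ_integrand hp hq ⟨hs.1, hs.2.trans_lt ht.2⟩

lemma strictMonoOn_arcsinPQ_Icc (hq : 0 < q) (hb₀ : 0 ≤ b) (hb₁ : b ≤ 1)
    (hint : IntervalIntegrable (fun t : ℝ => (1 - t ^ q) ^ (-(1 / p))) MeasureTheory.volume 0 b) :
    StrictMonoOn (arcsinPQ p q) (Icc 0 b) := by
  have hcont : ContinuousOn (arcsinPQ p q) (Icc 0 b) := by
    rw [← uIcc_of_le hb₀]
    exact intervalIntegral.continuousOn_primitive_interval' hint left_mem_uIcc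
  refine strictMonoOn_of_deriv_pos (convex_Icc 0 b) hcont fun t ht => ?_
  rw [interior_Icc] at ht
  have ht' : t ∈ Ico (0 : ℝ) 1 := ⟨ht.1.le, ht.2.trans_le hb₁⟩
  rw [(hasDerivAt_arcsinPQ hq ht').deriv]
  exact rpow_pos_of_pos (one_sub_rpow_pos hq ht') _

lemma strictMonoOn_arcsinPQ (hq : 0 < q) : StrictMonoOn (arcsinPQ p q) (Ico 0 1) :=
  fun _ hs _ ht hst => strictMonoOn_arcsinPQ_Icc hq ht.1 ht.2.le
    (intervalIntegrable_arcsinPQ_integrand hq ht) ⟨hs.1, hst.le⟩ (right_mem_Icc.2 ht.1) hst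

lemma arcsinPQ_pos (hq : 0 < q) (ht : t ∈ Ioo (0 : ℝ) 1) : 0 < arcsinPQ p q t :=
  arcsinPQ_zero p q ▸
    strictMonoOn_arcsinPQ hq (left_mem_Ico.2 one_pos) (Ioo_subset_Ico_self ht) ht.1

-- When the integrand is not integrable up to `1`, `arcsinPQ p q 1` takes the default value `0`.
lemma arcsinPQ_ne_arcsinPQ_one (hq : 0 < q) (ht : t ∈ Ioo (0 : ℝ) 1) :
    arcsinPQ p q t ≠ arcsinPQ p q 1 := by
  by_cases hint :
      IntervalIntegrable (fun t : ℝ => (1 - t ^ q) ^ (-(1 / p))) MeasureTheory.volume 0 1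
  · exact (strictMonoOn_arcsinPQ_Icc hq zero_le_one le_rfl hint (Ioo_subset_Icc_self ht)
      (right_mem_Icc.2 zero_le_one) ht.2).ne
  · have hone : arcsinPQ p q 1 = 0 := intervalIntegral.integral_undef hint
    exact hone ▸ (arcsinPQ_pos hq ht).ne'

lemma convexOn_arcsinPQ (hp : 0 ≤ p) (hq : 0 < q) : ConvexOn ℝ (Ico 0 1) (arcsinPQ p q) := by
  have hderiv : EqOn (deriv (arcsinPQ p q)) (fun t => (1 - t ^ q) ^ (-(1 / p))) (Ico 0 1) :=
    fun t ht => (hasDerivAt_arcsinPQ hq ht).deriv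
  exact MonotoneOn.convexOn_of_deriv (convex_Ico 0 1) (continuousOn_arcsinPQ hq)
    (fun t ht =>
      (hasDerivAt_arcsinPQ hq (interior_subset ht)).differentiableAt.differentiableWithinAt)
    (((monotoneOn_arcsinPQ_integrand hp hq).congr hderiv.symm).mono interior_subset)

lemma monotoneOn_arcsinPQ_div_self (hp : 0 ≤ p) (hq : 0 < q) :
    MonotoneOn (fun t => arcsinPQ p q t / t) (Ioo 0 1) := fun s hs t ht hst => by
  simpa only [arcsinPQ_zero, sub_zero] using (convexOn_arcsinPQ hp hq).secant_mono
    (left_mem_Ico.2 one_pos) (Ioo_subset_Ico_self hs) (Ioo_subset_Ico_self ht) hs.1.ne' ht.1.ne' hst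

lemma antitoneOn_div_arcsinPQ (hp : 0 ≤ p) (hq : 0 < q) :
    AntitoneOn (fun t => t / arcsinPQ p q t) (Ioo 0 1) := fun s hs t ht hst => by
  simpa only [inv_div] using inv_anti₀ (div_pos (arcsinPQ_pos hq hs) hs.1)
    (monotoneOn_arcsinPQ_div_self hp hq hs ht hst)

lemma antitoneOn_div_arcsinPQ_rpow_mul {a : ℝ} (hp : 0 ≤ p) (hq : 0 < q) (ha : 0 ≤ a) :
    AntitoneOn (fun t => (t / arcsinPQ p q t) ^ a * (1 - t ^ q) ^ (1 / p)) (Ioo 0 1) := by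
  intro s hs t ht hst
  have hratio : ∀ r ∈ Ioo (0 : ℝ) 1, 0 ≤ r / arcsinPQ p q r := fun r hr =>
    (div_pos hr.1 (arcsinPQ_pos hq hr)).le
  have hcos : 0 ≤ 1 - t ^ q := (one_sub_rpow_pos hq (Ioo_subset_Ico_self ht)).le
  exact mul_le_mul
    (rpow_le_rpow (hratio t ht) (antitoneOn_div_arcsinPQ hp hq hs ht hst) ha)
    (rpow_le_rpow hcos (antitoneOn_one_sub_rpow hq.le hs.1.le ht.1.le hst) (one_div_nonneg.2 hp))
    (rpow_nonneg hcos _) (rpow_nonneg (hratio s hs) _)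

lemma Ioo_subset_arcsinPQ_image (hp : 0 ≤ p) (hq : 0 < q) :
    Ioo 0 1 ⊆ arcsinPQ p q '' Ioo 0 1 := by
  intro x hx
  have hcont : ContinuousOn (arcsinPQ p q) (Icc 0 x) :=
    (continuousOn_arcsinPQ hq).mono (Icc_subset_Ico_right hx.2)
  have hmem : x ∈ Ioc (arcsinPQ p q 0) (arcsinPQ p q x) :=
    ⟨(arcsinPQ_zero p q).trans_lt hx.1, le_arcsinPQ hp hq (Ioo_subset_Ico_self hx)⟩
  exact image_mono (Ioc_subset_Ioo_right hx.2) (intermediate_value_Ioc hx.1.le hcont hmem)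

lemma sinPQ_arcsinPQ (hq : 0 < q) (ht : t ∈ Ioo (0 : ℝ) 1) : sinPQ p q (arcsinPQ p q t) = t := by
  have himage : arcsinPQ p q t ∈ arcsinPQ p q '' Icc 0 1 :=
    mem_image_of_mem _ (Ioo_subset_Icc_self ht)
  have hmem : sinPQ p q (arcsinPQ p q t) ∈ Icc (0 : ℝ) 1 := Function.invFunOn_mem himage
  have heq : arcsinPQ p q (sinPQ p q (arcsinPQ p q t)) = arcsinPQ p q t :=
    Function.invFunOn_eq himage
  have hne : sinPQ p q (arcsinPQ p q t) ≠ 1 := fun h =>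
    arcsinPQ_ne_arcsinPQ_one hq ht (h ▸ heq).symm
  exact (strictMonoOn_arcsinPQ hq).injOn ⟨hmem.1, hmem.2.lt_of_ne hne⟩ (Ioo_subset_Ico_self ht) heq

end ArcsinPQ

theorem sinPQ_aux_antitone_general {p q a : ℝ} (hp : 0 < p) (hq : 0 < q) (ha : 0 ≤ a) :
    AntitoneOn (fun x => (sinPQ p q x / x) ^ a * (1 - sinPQ p q x ^ q) ^ (1 / p))
      (arcsinPQ p q '' Ioo 0 1) := by
  rintro _ ⟨s, hs, rfl⟩ _ ⟨t, ht, rfl⟩ hst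
  have hst' : s ≤ t := ((strictMonoOn_arcsinPQ hq).le_iff_le (Ioo_subset_Ico_self hs)
    (Ioo_subset_Ico_self ht)).1 hst
  simpa only [sinPQ_arcsinPQ hq hs, sinPQ_arcsinPQ hq ht] using
    antitoneOn_div_arcsinPQ_rpow_mul hp.le hq ha hs ht hst'

theorem sinPQ_aux_antitone (p q a : ℝ) (hp : 1 < p) (hq : 1 < q) (ha : 0 ≤ a) :
    AntitoneOn (fun x => (sinPQ p q x / x) ^ a * (1 - sinPQ p q x ^ q) ^ (1/p))
      (Set.Ioo (0:ℝ) 1) :=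
  (sinPQ_aux_antitone_general (one_pos.trans hp) (one_pos.trans hq) ha).mono
    (Ioo_subset_arcsinPQ_image (one_pos.trans hp).le (one_pos.trans hq))
end

section
/- Let p, q > 1 and a ≥ 0. Then the function x ↦ (sinh_{p,q}(x)/x)^a · (1 + sinh_{p,q}(x)^q)^{1/p} is increasing on (0,1). -/
open Real Set

/-- `arsinhPQ p q x = ∫₀ˣ (1 + tᵠ)^(-1/p) dt`, the generalized inverse hyperbolic sine. -/
noncomputable def arsinhPQ (p q x : ℝ) : ℝ := ∫ t in (0:ℝ)..x, (1 + t ^ q) ^ (-(1/p))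

/-- `sinhPQ p q` is the inverse function of `arsinhPQ p q` (restricted to `[0,∞)`). -/
noncomputable def sinhPQ (p q : ℝ) : ℝ → ℝ := Function.invFunOn (arsinhPQ p q) (Set.Ici 0)

/-!
Substituting `x = arsinhPQ p q s` turns the function into
`(s / arsinhPQ p q s) ^ a * (1 + s ^ q) ^ (1 / p)`. Since `arsinhPQ p q` has a decreasing derivative
and vanishes at `0`, it is concave and `arsinhPQ p q s / s` decreases, so both factors increase
with `s`. The range of `arsinhPQ p q` contains `(0, 1)` because `arsinhPQ p q s` dominates
`s * (1 + s ^ q) ^ (-(1 / q))`, its value in the case `1 / p = 1 / q + 1`, which tends to `1`.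
-/

open Filter MeasureTheory
open scoped Topology

section Primitive

variable {E : Type*} [NormedAddCommGroup E] [NormedSpace ℝ E] {f : ℝ → E} {a : ℝ}

lemma continuousOn_Ici_primitive {μ : Measure ℝ} [NullSingletonClass μ]
    (hf : LocallyIntegrableOn f (Ici a) μ) :
    ContinuousOn (fun x => ∫ t in a..x, f t ∂μ) (Ici a) := by
  intro x hx
  have hax : a ≤ x + 1 := by linarith [mem_Ici.1 hx]
  have hcont : ContinuousOn (fun y => ∫ t in a..y, f t ∂μ) (Icc a (x + 1)) := by
    rw [← uIcc_of_le hax]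
    apply intervalIntegral.continuousOn_primitive_interval
    rw [uIcc_of_le hax]
    exact hf.integrableOn_compact_subset Icc_subset_Ici_self isCompact_Icc
  refine (hcont x ⟨hx, by linarith⟩).mono_of_mem_nhdsWithin ?_
  rw [← Ici_inter_Iic]
  exact inter_mem_nhdsWithin _ (Iic_mem_nhds (by linarith))

lemma hasDerivAt_primitive_of_continuousOn_Ici [CompleteSpace E] {x : ℝ}
    (hf : ContinuousOn f (Ici a)) (hx : a < x) :
    HasDerivAt (fun y => ∫ t in a..y, f t) (f x) x := by
  refine intervalIntegral.integral_hasDerivAt_right ?_ ?_ (hf.continuousAt (Ici_mem_nhds hx))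
  · exact (hf.mono (by rw [uIcc_of_le hx.le]; exact Icc_subset_Ici_self)).intervalIntegrable
  · exact (hf.mono Ioi_subset_Ici_self).stronglyMeasurableAtFilter isOpen_Ioi x hx

end Primitive

section RpowProfile

variable {q : ℝ}

lemma continuousOn_one_add_rpow_rpow (hq : 0 ≤ q) (r : ℝ) :
    ContinuousOn (fun t : ℝ => (1 + t ^ q) ^ r) (Ici 0) := by
  refine ContinuousOn.rpow_const ?_ fun t ht => Or.inl ?_
  · exact (continuous_const.add (continuous_rpow_const hq)).continuousOn
  · have := rpow_nonneg (mem_Ici.1 ht) q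
    positivity

lemma antitoneOn_one_add_rpow_rpow {r : ℝ} (hq : 0 ≤ q) (hr : r ≤ 0) :
    AntitoneOn (fun t : ℝ => (1 + t ^ q) ^ r) (Ici 0) := by
  intro s hs t _ hst
  have h0 : 0 ≤ s ^ q := rpow_nonneg hs q
  have h1 : s ^ q ≤ t ^ q := rpow_le_rpow hs hst hq
  exact rpow_le_rpow_of_nonpos (by linarith) (by linarith) hr

lemma hasDerivAt_mul_one_add_rpow_rpow {t : ℝ} (hq : q ≠ 0) (ht : 0 < t) :
    HasDerivAt (fun t : ℝ => t * (1 + t ^ q) ^ (-(1 / q))) ((1 + t ^ q) ^ (-(1 / q) - 1)) t := by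
  have hpos : 0 < 1 + t ^ q := by positivity
  have hinner : HasDerivAt (fun t : ℝ => 1 + t ^ q) (q * t ^ (q - 1)) t :=
    (hasDerivAt_rpow_const (Or.inl ht.ne')).const_add 1
  refine ((hasDerivAt_id t).mul
    (hinner.rpow_const (p := -(1 / q)) (Or.inl hpos.ne'))).congr_deriv ?_
  rw [rpow_sub_one ht.ne', rpow_sub_one hpos.ne', id]
  field_simp
  ring

lemma tendsto_mul_one_add_rpow_rpow_atTop (hq : 0 < q) :
    Tendsto (fun t : ℝ => t * (1 + t ^ q) ^ (-(1 / q))) atTop (𝓝 1) := by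
  have hlim : Tendsto (fun t : ℝ => (t ^ (-q) + 1) ^ (-(1 / q))) atTop (𝓝 1) := by
    simpa using ((tendsto_rpow_neg_atTop hq).add_const 1).rpow_const (p := -(1 / q)) (by simp)
  refine hlim.congr' ?_
  filter_upwards [eventually_gt_atTop 0] with t ht
  have hfactor : 1 + t ^ q = t ^ q * (t ^ (-q) + 1) := by
    rw [mul_add, ← rpow_add ht, add_neg_cancel, rpow_zero, mul_one]
  have hcancel : (t ^ q) ^ (-(1 / q)) = t⁻¹ := by
    rw [← rpow_mul ht.le, mul_neg, mul_one_div_cancel hq.ne', rpow_neg_one]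
  rw [hfactor, mul_rpow (by positivity) (by positivity), hcancel, mul_inv_cancel_left₀ ht.ne']

end RpowProfile

variable {p q : ℝ}

lemma arsinhPQ_zero (p q : ℝ) : arsinhPQ p q 0 = 0 := intervalIntegral.integral_same

lemma continuousOn_arsinhPQ (p : ℝ) (hq : 0 ≤ q) : ContinuousOn (arsinhPQ p q) (Ici 0) :=
  continuousOn_Ici_primitive
    ((continuousOn_one_add_rpow_rpow hq _).locallyIntegrableOn measurableSet_Ici)

lemma hasDerivAt_arsinhPQ (p : ℝ) {x : ℝ} (hq : 0 ≤ q) (hx : 0 < x) :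
    HasDerivAt (arsinhPQ p q) ((1 + x ^ q) ^ (-(1 / p))) x :=
  hasDerivAt_primitive_of_continuousOn_Ici (continuousOn_one_add_rpow_rpow hq _) hx

lemma strictMonoOn_arsinhPQ (p : ℝ) (hq : 0 ≤ q) : StrictMonoOn (arsinhPQ p q) (Ici 0) := by
  refine strictMonoOn_of_deriv_pos (convex_Ici 0) (continuousOn_arsinhPQ p hq) fun x hx => ?_
  rw [interior_Ici, mem_Ioi] at hx
  rw [(hasDerivAt_arsinhPQ p hq hx).deriv]
  positivity

lemma arsinhPQ_pos (p : ℝ) {x : ℝ} (hq : 0 ≤ q) (hx : 0 < x) : 0 < arsinhPQ p q x := by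
  simpa only [arsinhPQ_zero] using strictMonoOn_arsinhPQ p hq self_mem_Ici hx.le hx

lemma concaveOn_arsinhPQ (hp : 0 ≤ p) (hq : 0 ≤ q) : ConcaveOn ℝ (Ici 0) (arsinhPQ p q) := by
  have hderiv : EqOn (deriv (arsinhPQ p q)) (fun x => (1 + x ^ q) ^ (-(1 / p))) (Ioi 0) :=
    fun x hx => (hasDerivAt_arsinhPQ p hq hx).deriv
  have hanti : AntitoneOn (fun x : ℝ => (1 + x ^ q) ^ (-(1 / p))) (Ioi 0) :=
    (antitoneOn_one_add_rpow_rpow hq (by simpa using hp)).mono Ioi_subset_Ici_self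
  refine AntitoneOn.concaveOn_of_deriv (convex_Ici 0) (continuousOn_arsinhPQ p hq) ?_ ?_ <;>
    rw [interior_Ici]
  · exact fun x hx => (hasDerivAt_arsinhPQ p hq hx).differentiableAt.differentiableWithinAt
  · exact hanti.congr hderiv.symm

lemma antitoneOn_arsinhPQ_div_self (hp : 0 ≤ p) (hq : 0 ≤ q) :
    AntitoneOn (fun x => arsinhPQ p q x / x) (Ioi 0) := by
  have hslope := (concaveOn_arsinhPQ hp hq).slope_anti self_mem_Ici
  rw [Ici_sdiff_left] at hslope
  exact hslope.congr fun x _ => by simp [slope_def_field, arsinhPQ_zero]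

lemma monotoneOn_self_div_arsinhPQ (hp : 0 ≤ p) (hq : 0 ≤ q) :
    MonotoneOn (fun x => x / arsinhPQ p q x) (Ioi 0) := by
  intro s hs t ht hst
  simpa only [inv_div] using inv_anti₀ (div_pos (arsinhPQ_pos p hq ht) ht)
    (antitoneOn_arsinhPQ_div_self hp hq hs ht hst)

lemma mul_one_add_rpow_rpow_le_arsinhPQ {x : ℝ} (hq : 0 < q) (hpq : 1 / p ≤ 1 / q + 1)
    (hx : 0 ≤ x) : x * (1 + x ^ q) ^ (-(1 / q)) ≤ arsinhPQ p q x := by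
  have hderiv : ∀ t ∈ interior (Ici (0 : ℝ)),
      HasDerivAt (fun t => arsinhPQ p q t - t * (1 + t ^ q) ^ (-(1 / q)))
        ((1 + t ^ q) ^ (-(1 / p)) - (1 + t ^ q) ^ (-(1 / q) - 1)) t := by
    intro t ht
    rw [interior_Ici, mem_Ioi] at ht
    exact (hasDerivAt_arsinhPQ p hq.le ht).sub (hasDerivAt_mul_one_add_rpow_rpow hq.ne' ht)
  have hmono : MonotoneOn (fun t => arsinhPQ p q t - t * (1 + t ^ q) ^ (-(1 / q))) (Ici 0) := by
    refine monotoneOn_of_deriv_nonneg (convex_Ici 0) ?_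
      (fun t ht => (hderiv t ht).differentiableAt.differentiableWithinAt) fun t ht => ?_
    · exact (continuousOn_arsinhPQ p hq.le).sub
        (continuousOn_id.mul (continuousOn_one_add_rpow_rpow hq.le _))
    · have hone : 1 ≤ 1 + t ^ q := le_add_of_nonneg_right (rpow_nonneg (interior_subset ht) q)
      rw [(hderiv t ht).deriv, sub_nonneg]
      exact rpow_le_rpow_of_exponent_le hone (by linarith)
  simpa [arsinhPQ_zero] using hmono self_mem_Ici hx hx

lemma Ioo_zero_one_subset_image_arsinhPQ (hq : 0 < q) (hpq : 1 / p ≤ 1 / q + 1) :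
    Ioo 0 1 ⊆ arsinhPQ p q '' Ioi 0 := by
  rintro x ⟨hx0, hx1⟩
  obtain ⟨y, hxy, hy⟩ := (((tendsto_mul_one_add_rpow_rpow_atTop hq).eventually_const_lt hx1).and
    (eventually_ge_atTop 0)).exists
  have hx : x ∈ Ioo (arsinhPQ p q 0) (arsinhPQ p q y) :=
    ⟨by rwa [arsinhPQ_zero], hxy.trans_le (mul_one_add_rpow_rpow_le_arsinhPQ hq hpq hy)⟩
  obtain ⟨s, hs, rfl⟩ := intermediate_value_Ioo hy
    ((continuousOn_arsinhPQ p hq.le).mono Icc_subset_Ici_self) hx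
  exact ⟨s, hs.1, rfl⟩

lemma sinhPQ_arsinhPQ (p : ℝ) {x : ℝ} (hq : 0 ≤ q) (hx : 0 ≤ x) :
    sinhPQ p q (arsinhPQ p q x) = x :=
  (strictMonoOn_arsinhPQ p hq).injOn.leftInvOn_invFunOn hx

theorem sinhPQ_aux_monotone_general {a : ℝ} (hp : 0 < p) (hq : 0 ≤ q) (ha : 0 ≤ a) :
    MonotoneOn (fun x => (sinhPQ p q x / x) ^ a * (1 + sinhPQ p q x ^ q) ^ (1 / p))
      (arsinhPQ p q '' Ioi 0) := by
  rintro _ ⟨s, hs, rfl⟩ _ ⟨t, ht, rfl⟩ hxy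
  rw [mem_Ioi] at hs ht
  have hst : s ≤ t := ((strictMonoOn_arsinhPQ p hq).le_iff_le hs.le ht.le).1 hxy
  have hdiv : s / arsinhPQ p q s ≤ t / arsinhPQ p q t :=
    monotoneOn_self_div_arsinhPQ hp.le hq hs ht hst
  have hs' : 0 < arsinhPQ p q s := arsinhPQ_pos p hq hs
  have ht' : 0 < arsinhPQ p q t := arsinhPQ_pos p hq ht
  simp only [sinhPQ_arsinhPQ p hq hs.le, sinhPQ_arsinhPQ p hq ht.le]
  gcongr

theorem sinhPQ_aux_monotone (p q a : ℝ) (hp : 1 < p) (hq : 1 < q) (ha : 0 ≤ a) :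
    MonotoneOn (fun x => (sinhPQ p q x / x) ^ a * (1 + sinhPQ p q x ^ q) ^ (1/p))
      (Set.Ioo (0:ℝ) 1) := by
  have hpq : 1 / p ≤ 1 / q + 1 := by
    linarith [div_le_one_of_le₀ hp.le (by positivity), one_div_pos.2 (zero_lt_one.trans hq)]
  exact (sinhPQ_aux_monotone_general (by positivity) (by positivity) ha).mono
    (Ioo_zero_one_subset_image_arsinhPQ (by positivity) hpq)
end
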